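/- Let n ≥ 2, let ξ be a real number with 1 ≤ ξ ≤ n−1, and let C ∈ ℝ^{n×n} be symmetric with nonnegative entries and C_ij = 0 iff i = j. Suppose ε ∈ ℝⁿ has all entries positive, and the matrix P^e defined by P^e_ij = exp(−C_ij/ε_i)/∑_ℓ exp(−C_iℓ/ε_i) satisfies H(P^e_{i:}) = log ξ + 1 for every i. Then for every σ with 0 < σ ≤ min_i ε_i, setting K_σ = (exp(−C_ij/σ))_{ij}, the matrix P^e is the unique minimizer of P ↦ KL(P|K_σ) over H_ξ. -/

import Mathlib

open Finset

/-- Entropy of a nonnegative vector, with the convention `0 * log 0 = 0`. -/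
noncomputable def ent {n : ℕ} (p : Fin n → ℝ) : ℝ :=
  -∑ i, p i * (Real.log (p i) - 1)

/-- Membership in the set `H_ξ`. -/
def Hxi {n : ℕ} (ξ : ℝ) (P : Fin n → Fin n → ℝ) : Prop :=
  (∀ i j, 0 ≤ P i j) ∧ (∀ i, ∑ j, P i j = 1) ∧ (∀ i, Real.log ξ + 1 ≤ ent (P i))

/-- Kullback–Leibler divergence, with the convention `0 * log 0 = 0`. -/
noncomputable def klDiv {n : ℕ} (P K : Fin n → Fin n → ℝ) : ℝ :=
  ∑ i, ∑ j, P i j * (Real.log (P i j / K i j) - 1)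

noncomputable def gap (p q : ℝ) : ℝ := p * (Real.log p - Real.log q) - p + q

theorem gap_eq {p q : ℝ} (hp : 0 < p) (hq : 0 < q) :
    gap p q = p * ((q / p - 1) - Real.log (q / p)) := by
  unfold gap
  rw [Real.log_div hq.ne' hp.ne']
  field_simp
  ring

theorem gap_nonneg {p q : ℝ} (hp : 0 ≤ p) (hq : 0 < q) : 0 ≤ gap p q := by
  rcases hp.eq_or_lt with rfl | hp
  · simp [gap, hq.le]
  · rw [gap_eq hp hq]
    have := Real.log_le_sub_one_of_pos (div_pos hq hp)
    exact mul_nonneg hp.le (by linarith)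

theorem gap_eq_zero {p q : ℝ} (hp : 0 ≤ p) (hq : 0 < q) (h : gap p q = 0) : p = q := by
  rcases hp.eq_or_lt with rfl | hp
  · simp [gap] at h; exact h.symm
  · rw [gap_eq hp hq] at h
    by_contra hne
    have h1 : q / p ≠ 1 := fun h => hne ((div_eq_one_iff_eq hp.ne').1 h).symm
    have := Real.log_lt_sub_one_of_pos (div_pos hq hp) h1
    have := mul_pos hp (sub_pos.2 this)
    linarith

theorem kl_row {n : ℕ} (p c : Fin n → ℝ) (s : ℝ) :
    ∑ j, p j * (Real.log (p j / Real.exp (-c j / s)) - 1) = -ent p + (∑ j, p j * c j) / s := by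
  unfold ent
  rw [neg_neg, Finset.sum_div, ← Finset.sum_add_distrib]
  refine Finset.sum_congr rfl fun j _ => ?_
  by_cases h : p j = 0
  · simp [h]
  · rw [Real.log_div h (Real.exp_pos _).ne', Real.log_exp]
    ring

theorem gap_row {n : ℕ} (p q c : Fin n → ℝ) (e L : ℝ)
    (hp : ∑ j, p j = 1) (hq : ∑ j, q j = 1) (hlog : ∀ j, Real.log (q j) = -c j / e - L) :
    ∑ j, gap (p j) (q j) = -ent p + (∑ j, p j * c j) / e + L + 1 := by
  have h : ∀ j, gap (p j) (q j) =
      p j * (Real.log (p j) - 1) + p j * c j / e + p j * L + q j := fun j => by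
    unfold gap
    rw [hlog]
    ring
  simp_rw [h]
  rw [Finset.sum_add_distrib, Finset.sum_add_distrib, Finset.sum_add_distrib, hq,
    ← Finset.sum_mul, hp, ← Finset.sum_div]
  unfold ent
  ring

theorem row_bound {n : ℕ} (p q c : Fin n → ℝ) (e s L : ℝ) (hs : 0 < s) (hse : s ≤ e)
    (hp : ∑ j, p j = 1) (hq : ∑ j, q j = 1) (hlog : ∀ j, Real.log (q j) = -c j / e - L)
    (hent : ent q ≤ ent p) (hg : 0 ≤ ∑ j, gap (p j) (q j)) :
    ∑ j, gap (p j) (q j) ≤ ∑ j, p j * (Real.log (p j / Real.exp (-c j / s)) - 1)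
      - ∑ j, q j * (Real.log (q j / Real.exp (-c j / s)) - 1) := by
  have he : 0 < e := hs.trans_le hse
  rw [kl_row, kl_row]
  have h1 := gap_row p q c e L hp hq hlog
  have h2 := gap_row q q c e L hq hq hlog
  have h0 : ∑ j, gap (q j) (q j) = 0 := Finset.sum_eq_zero fun j _ => by unfold gap; ring
  rw [h0] at h2
  set G := ∑ j, gap (p j) (q j)
  set A := ∑ j, p j * c j
  set B := ∑ j, q j * c j
  have h3 : (A - B) / e = G + (ent p - ent q) := by rw [sub_div]; linarith
  have h4 : 0 ≤ A - B := by
    rw [div_eq_iff he.ne'] at h3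
    rw [h3]
    exact mul_nonneg (by linarith) he.le
  have h5 : (A - B) / e ≤ (A - B) / s := div_le_div_of_nonneg_left h4 hs hse
  rw [sub_div _ _ s] at h5
  linarith

theorem entropic_affinity_as_KL_projection
    {n : ℕ} (hn : 2 ≤ n) (ξ : ℝ) (hξ1 : 1 ≤ ξ) (hξ2 : ξ ≤ (n : ℝ) - 1)
    (C : Fin n → Fin n → ℝ) (hCsym : ∀ i j, C i j = C j i)
    (hCnn : ∀ i j, 0 ≤ C i j) (hCzero : ∀ i j, C i j = 0 ↔ i = j)
    (ε : Fin n → ℝ) (hε : ∀ i, 0 < ε i)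
    (Pe : Fin n → Fin n → ℝ)
    (hPe : ∀ i j, Pe i j = Real.exp (-C i j / ε i) / ∑ l, Real.exp (-C i l / ε i))
    (hent : ∀ i, ent (Pe i) = Real.log ξ + 1)
    (σ : ℝ) (hσ0 : 0 < σ) (hσ : ∀ i, σ ≤ ε i) :
    let Kσ : Fin n → Fin n → ℝ := fun i j => Real.exp (-C i j / σ)
    Hxi ξ Pe ∧ (∀ P, Hxi ξ P → klDiv Pe Kσ ≤ klDiv P Kσ) ∧
      (∀ P, Hxi ξ P → klDiv P Kσ = klDiv Pe Kσ → P = Pe) := by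
  intro Kσ
  have hZ : ∀ i, 0 < ∑ l, Real.exp (-C i l / ε i) := fun i =>
    Finset.sum_pos (fun l _ => Real.exp_pos _) ⟨i, Finset.mem_univ i⟩
  have hpos : ∀ i j, 0 < Pe i j := fun i j => by
    rw [hPe]; exact div_pos (Real.exp_pos _) (hZ i)
  have hsum : ∀ i, ∑ j, Pe i j = 1 := fun i => by
    simp_rw [hPe]
    rw [← Finset.sum_div]
    exact div_self (hZ i).ne'
  have hlog : ∀ i j, Real.log (Pe i j) =
      -C i j / ε i - Real.log (∑ l, Real.exp (-C i l / ε i)) := fun i j => by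
    rw [hPe, Real.log_div (Real.exp_pos _).ne' (hZ i).ne', Real.log_exp]
  have key : ∀ P, Hxi ξ P →
      ∑ i, ∑ j, gap (P i j) (Pe i j) ≤ klDiv P Kσ - klDiv Pe Kσ := by
    intro P hP
    unfold klDiv
    rw [← Finset.sum_sub_distrib]
    refine Finset.sum_le_sum fun i _ => ?_
    refine row_bound (P i) (Pe i) (C i) (ε i) σ _ hσ0 (hσ i) (hP.2.1 i) (hsum i) (hlog i) ?_ ?_
    · rw [hent i]; exact hP.2.2 i
    · exact Finset.sum_nonneg fun j _ => gap_nonneg (hP.1 i j) (hpos i j)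
  have hg : ∀ P, Hxi ξ P → ∀ i j, 0 ≤ gap (P i j) (Pe i j) := fun P hP i j =>
    gap_nonneg (hP.1 i j) (hpos i j)
  refine ⟨⟨fun i j => (hpos i j).le, hsum, fun i => (hent i).ge⟩, fun P hP => ?_, fun P hP h => ?_⟩
  · have h1 := key P hP
    have h2 : 0 ≤ ∑ i, ∑ j, gap (P i j) (Pe i j) :=
      Finset.sum_nonneg fun i _ => Finset.sum_nonneg fun j _ => hg P hP i j
    linarith
  · have h1 := key P hP
    rw [h, sub_self] at h1
    have h2 : ∀ i ∈ Finset.univ, 0 ≤ ∑ j, gap (P i j) (Pe i j) :=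
      fun i _ => Finset.sum_nonneg fun j _ => hg P hP i j
    have h3 := (Finset.sum_eq_zero_iff_of_nonneg h2).1 (le_antisymm h1 (Finset.sum_nonneg h2))
    funext i j
    have h4 := (Finset.sum_eq_zero_iff_of_nonneg (fun j _ => hg P hP i j)).1
      (h3 i (Finset.mem_univ i)) j (Finset.mem_univ j)
    exact gap_eq_zero (hP.1 i j) (hpos i j) h4
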